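/- arXiv:2506.11223 — 2 statements merged into one kernel-verified Lean document; each statement's English description precedes it below -/
import Mathlib

section
/- Let T be a tree (a connected acyclic finite simple graph) with n ≥ 4 vertices. Then the total irregularity satisfies 2(n−2) ≤ irr_t(T) ≤ (n−1)(n−2); the upper bound is attained by the star K_{1,n−1} and the lower bound is attained by the path P_n. -/
/-!
Write `x v = d_v - 1`. In a tree on `n ≥ 2` vertices `x v ≥ 0` and, by the handshake lemma,
`∑ x v = n - 2`; moreover `|d_u - d_v| = |x u - x v|`. Summing over ordered pairs counts every
unordered pair twice (`two_mul_totalIrr`).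

* Upper bound: for `u ≠ v`, `|x u - x v| ≤ x u + x v`, and the right-hand sides add up to
  `(n - 1) ∑ x v`. Equality holds when of any two distinct vertices one is a leaf, as in a star.
* Lower bound: keeping only the pairs formed by a leaf and a non-leaf leaves `L ∑ x v`, where `L`
  is the number of leaves, and `L ≥ 2` because `∑ (x v - 1) = -2`. Equality holds when all
  degrees are at most `2`, as in a path.
-/

open Finset

/-- The total irregularity: `irr_t(G) = Σ_{{u,v} ⊆ V(G)} |d_u − d_v|`,
the sum over unordered pairs of vertices. -/
noncomputable def totalIrr {V : Type*} [Fintype V] [DecidableEq V] (G : SimpleGraph V)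
    [DecidableRel G.Adj] : ℤ :=
  ∑ e ∈ (Finset.univ : Finset V).sym2,
    Sym2.lift ⟨fun u v => |(G.degree u : ℤ) - (G.degree v : ℤ)|,
      fun _ _ => abs_sub_comm _ _⟩ e

/-- The fibre of `(u, v) ↦ s(u, v)` over a non-diagonal element has two points; diagonal elements
contribute nothing to either side. -/
theorem two_mul_totalIrr {V : Type*} [Fintype V] [DecidableEq V] (G : SimpleGraph V)
    [DecidableRel G.Adj] :
    2 * totalIrr G = ∑ u, ∑ v, |(G.degree u : ℤ) - (G.degree v : ℤ)| := by
  rw [totalIrr, ← Finset.sum_product', Finset.mul_sum, Finset.univ_product_univ,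
    ← Finset.sum_fiberwise_of_maps_to
      (s := (univ : Finset (V × V))) (t := (univ : Finset V).sym2) (g := fun p => s(p.1, p.2))
      (by simp)]
  refine Finset.sum_congr rfl fun e _ => ?_
  induction e using Sym2.ind with
  | _ a b =>
    by_cases h : a = b
    · subst h
      have hf : ({p : V × V | s(p.1, p.2) = s(a, a)} : Finset (V × V)) = {(a, a)} := by
        ext ⟨p, q⟩; simp
      rw [hf]
      simp
    · have hf : ({p : V × V | s(p.1, p.2) = s(a, b)} : Finset (V × V)) = {(a, b), (b, a)} := by
        ext ⟨p, q⟩; simp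
      rw [hf, Finset.sum_pair (by simp [h])]
      simp only [Sym2.lift_mk]
      rw [abs_sub_comm (G.degree b : ℤ), two_mul]

theorem sum_sum_add_sub_diag {V : Type*} [Fintype V] [DecidableEq V] (x : V → ℤ) :
    ∑ u, ∑ v, (x u + x v - if u = v then 2 * x u else 0) =
      2 * ((Fintype.card V : ℤ) - 1) * ∑ v, x v := by
  simp only [Finset.sum_sub_distrib, Finset.sum_add_distrib, Finset.sum_const,
    Finset.sum_ite_eq, Finset.mem_univ, if_true, Finset.card_univ, nsmul_eq_mul, ← Finset.mul_sum]
  ring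

theorem sum_sum_mul_add_mul {V : Type*} [Fintype V] (x z : V → ℤ) :
    ∑ u, ∑ v, (z u * x v + z v * x u) = 2 * (∑ v, z v) * ∑ v, x v := by
  simp only [Finset.sum_add_distrib, ← Finset.mul_sum, ← Finset.sum_mul]
  ring

/-- Every vertex of a star other than the centre is a leaf. -/
theorem degree_le_one_of_iso_star {V : Type*} [Fintype V] (T : SimpleGraph V)
    [DecidableRel T.Adj] {m : ℕ} (f : T ≃g completeBipartiteGraph (Fin 1) (Fin m))
    (u : V) (hu : f u ≠ Sum.inl 0) : T.degree u ≤ 1 := by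
  rw [← SimpleGraph.card_neighborFinset_eq_degree, Finset.card_le_one]
  have key : ∀ a, T.Adj u a → f a = Sum.inl 0 := by
    intro a ha
    have h := f.map_adj_iff.mpr ha
    rcases hfu : f u with i | i
    · exact absurd (hfu.trans (by rw [Subsingleton.elim i 0])) hu
    · rcases hfa : f a with j | j
      · rw [Subsingleton.elim j 0]
      · simp [hfu, hfa] at h
  intro a ha b hb
  rw [SimpleGraph.mem_neighborFinset] at ha hb
  exact f.injective ((key a ha).trans (key b hb).symm)

theorem degree_le_two_of_iso_path {V : Type*} [Fintype V] (T : SimpleGraph V)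
    [DecidableRel T.Adj] {m : ℕ} (f : T ≃g SimpleGraph.pathGraph m) (u : V) :
    T.degree u ≤ 2 := by
  rw [← SimpleGraph.card_neighborFinset_eq_degree]
  refine le_trans (Finset.card_le_card_of_injOn (t := {(f u : ℕ) - 1, (f u : ℕ) + 1})
    (fun a => (f a : ℕ)) ?_ ?_) Finset.card_le_two
  · intro a ha
    have ha' : T.Adj u a := by simpa using ha
    have h := SimpleGraph.pathGraph_adj.mp (f.map_adj_iff.mpr ha')
    simp only [Finset.coe_insert, Finset.coe_singleton, Set.mem_insert_iff,
      Set.mem_singleton_iff]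
    omega
  · intro a _ b _ hab
    exact f.injective (Fin.ext hab)

theorem totalIrr_bounds_of_isTree
    {V : Type*} [Fintype V] [DecidableEq V] (T : SimpleGraph V) [DecidableRel T.Adj]
    (hT : T.IsTree) (n : ℕ) (hn : Fintype.card V = n) (h4 : 4 ≤ n) :
    (2 * ((n : ℤ) - 2) ≤ totalIrr T ∧ totalIrr T ≤ ((n : ℤ) - 1) * ((n : ℤ) - 2)) ∧
    (Nonempty (T ≃g completeBipartiteGraph (Fin 1) (Fin (n - 1))) →
      totalIrr T = ((n : ℤ) - 1) * ((n : ℤ) - 2)) ∧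
    (Nonempty (T ≃g SimpleGraph.pathGraph n) →
      totalIrr T = 2 * ((n : ℤ) - 2)) := by
  have : Nontrivial V := Fintype.one_lt_card_iff_nontrivial.mp (by omega)
  obtain ⟨x, hx⟩ : ∃ x : V → ℤ, ∀ v, x v = (T.degree v : ℤ) - 1 := ⟨_, fun _ => rfl⟩
  have hx0 : ∀ v, 0 ≤ x v := by
    intro v
    have := hT.connected.preconnected.degree_pos_of_nontrivial v
    rw [hx]; omega
  have hsum : ∑ v, x v = (n : ℤ) - 2 := by
    have h1 := T.sum_degrees_eq_twice_card_edges
    have h2 := hT.card_edgeFinset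
    have h3 : ∑ v, (T.degree v : ℤ) = 2 * (T.edgeFinset.card : ℤ) := by exact_mod_cast h1
    simp only [hx, Finset.sum_sub_distrib, h3, Finset.sum_const, Finset.card_univ, nsmul_eq_mul]
    omega
  have hirr : 2 * totalIrr T = ∑ u, ∑ v, |x u - x v| := by
    simp only [two_mul_totalIrr, hx, sub_sub_sub_cancel_right]
  have hup := sum_sum_add_sub_diag x
  rw [hsum, hn] at hup
  -- `z` is the indicator function of the set of leaves.
  obtain ⟨z, hz⟩ : ∃ z : V → ℤ, ∀ v, z v = if x v = 0 then 1 else 0 := ⟨_, fun _ => rfl⟩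
  have hlow := sum_sum_mul_add_mul x z
  rw [hsum] at hlow
  refine ⟨⟨?_, ?_⟩, ?_, ?_⟩
  · have hL : 2 ≤ ∑ v, z v := by
      have : ∑ v, (1 - z v) ≤ ∑ v, x v := by
        refine Finset.sum_le_sum fun v _ => ?_
        have := hx0 v
        rw [hz]; split_ifs <;> omega
      rw [hsum, Finset.sum_sub_distrib] at this
      simp [hn] at this
      linarith
    have h : ∑ u, ∑ v, (z u * x v + z v * x u) ≤ ∑ u, ∑ v, |x u - x v| := by
      refine Finset.sum_le_sum fun u _ => Finset.sum_le_sum fun v _ => ?_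
      have hu := hx0 u
      have hv := hx0 v
      have := le_abs_self (x u - x v)
      have := neg_abs_le (x u - x v)
      rw [hz, hz]; split_ifs <;> omega
    have hn2 : (0 : ℤ) ≤ (n : ℤ) - 2 := by omega
    nlinarith
  · have h : ∑ u, ∑ v, |x u - x v| ≤
        ∑ u, ∑ v, (x u + x v - if u = v then 2 * x u else 0) := by
      refine Finset.sum_le_sum fun u _ => Finset.sum_le_sum fun v _ => ?_
      have hu := hx0 u
      have hv := hx0 v
      split_ifs with huv
      · subst huv; simp; linarith
      · rw [abs_le]; constructor <;> linarith
    linarith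
  · rintro ⟨f⟩
    have h : ∑ u, ∑ v, |x u - x v| =
        ∑ u, ∑ v, (x u + x v - if u = v then 2 * x u else 0) := by
      refine Finset.sum_congr rfl fun u _ => Finset.sum_congr rfl fun v _ => ?_
      have hu := hx0 u
      have hv := hx0 v
      have hleaf : ∀ w, f w ≠ Sum.inl 0 → x w = 0 := by
        intro w hw
        have h1 := degree_le_one_of_iso_star T f w hw
        have h2 := hx0 w
        have h3 := hx w
        omega
      split_ifs with huv
      · subst huv; simp; ring
      · by_cases hc : f u = Sum.inl 0
        · have : x v = 0 := hleaf v fun hv => huv (f.injective (hc.trans hv.symm))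
          simp [this, abs_of_nonneg hu]
        · simp [hleaf u hc, abs_of_nonneg hv]
    linarith
  · rintro ⟨f⟩
    have hx1 : ∀ v, x v = 0 ∨ x v = 1 := by
      intro v
      have h1 := degree_le_two_of_iso_path T f v
      have h2 := hx0 v
      have h3 := hx v
      omega
    have hL : ∑ v, z v = 2 := by
      have : ∑ v, (1 - z v) = ∑ v, x v := by
        refine Finset.sum_congr rfl fun v _ => ?_
        rcases hx1 v with h | h <;> simp [hz, h]
      rw [hsum, Finset.sum_sub_distrib] at this
      simp [hn] at this
      linarith
    have h : ∑ u, ∑ v, |x u - x v| = ∑ u, ∑ v, (z u * x v + z v * x u) := by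
      refine Finset.sum_congr rfl fun u _ => Finset.sum_congr rfl fun v _ => ?_
      rcases hx1 u with h | h <;> rcases hx1 v with h' | h' <;> simp [hz, h, h']
    rw [hL] at hlow
    linarith
end

section
/- Let T be a tree (a connected acyclic finite simple graph) with n ≥ 2 vertices. Then irr(T) ≤ (n−1)(n−2), and equality holds if and only if T is isomorphic to the star K_{1,n−1}. -/
/-!
In a tree on `n ≥ 2` vertices every degree lies between `1` and `n - 1`, so each edge contributes
at most `n - 2` to the Albertson index. As there are `n - 1` edges, the bound follows, with equality
exactly when every edge contributes `n - 2`. One such edge already forces an endpoint of degree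
`n - 1`, that is, a universal vertex; a tree with a universal vertex `r` contains the star centred
at `r`, and equals it because both have `n - 1` edges. Conversely, every edge of a star joins
a vertex of degree `n - 1` to a leaf.
-/

open Finset

/-- The Albertson index: `irr(G) = Σ_{uv ∈ E(G)} |d_u − d_v|`. -/
noncomputable def albertson {V : Type*} [Fintype V] [DecidableEq V] (G : SimpleGraph V)
    [DecidableRel G.Adj] : ℤ :=
  ∑ e ∈ G.edgeFinset,
    Sym2.lift ⟨fun u v => |(G.degree u : ℤ) - (G.degree v : ℤ)|,
      fun _ _ => abs_sub_comm _ _⟩ e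

open SimpleGraph in
theorem SimpleGraph.IsTree.eq_starGraph {V : Type*} [Fintype V] [DecidableEq V]
    {T : SimpleGraph V} [DecidableRel T.Adj] (hT : T.IsTree) {r : V}
    (hr : T.IsUniversal r) : T = starGraph r := by
  have hle : starGraph r ≤ T := by
    intro x y h
    rw [starGraph_adj] at h
    obtain ⟨hne, rfl | rfl⟩ := h
    · exact hr hne
    · exact (hr hne.symm).symm
  have h1 := hT.card_edgeFinset
  have h2 := (isTree_starGraph r).card_edgeFinset
  have h3 : (starGraph r).edgeFinset = T.edgeFinset :=
    Finset.eq_of_subset_of_card_le (edgeFinset_subset_edgeFinset.2 hle) (by omega)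
  exact (edgeFinset_inj.1 h3).symm

open SimpleGraph in
theorem SimpleGraph.nonempty_iso_star_iff {V : Type*} [Fintype V] [DecidableEq V]
    (T : SimpleGraph V) (n : ℕ) (hn : Fintype.card V = n) (h2 : 2 ≤ n) :
    Nonempty (T ≃g completeBipartiteGraph (Fin 1) (Fin (n - 1))) ↔ ∃ r, T = starGraph r := by
  constructor
  · rintro ⟨φ⟩
    refine ⟨φ.symm (Sum.inl 0), ?_⟩
    ext x y
    obtain ⟨a, rfl⟩ := φ.symm.surjective x
    obtain ⟨b, rfl⟩ := φ.symm.surjective y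
    rw [φ.symm.map_adj_iff, starGraph_adj, φ.symm.injective.ne_iff, φ.symm.injective.eq_iff,
      φ.symm.injective.eq_iff]
    rcases a with a | a <;> rcases b with b | b <;> simp [completeBipartiteGraph_adj] <;> omega
  · rintro ⟨r, rfl⟩
    have hc : Fintype.card V = Fintype.card (Fin 1 ⊕ Fin (n - 1)) := by
      simp; omega
    let e₀ := Fintype.equivOfCardEq hc
    -- The swap makes the bijection send the centre `r` to the one-element side.
    let e := e₀.trans (Equiv.swap (e₀ r) (Sum.inl 0))
    have her : e r = Sum.inl 0 := by simp [e]
    have hiff (x : V) : x = r ↔ e x = Sum.inl 0 := by rw [← her, e.injective.eq_iff]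
    refine ⟨⟨e, ?_⟩⟩
    intro x y
    rw [starGraph_adj, hiff, hiff, ← e.injective.ne_iff]
    generalize e x = a
    generalize e y = b
    rcases a with a | a <;> rcases b with b | b <;> simp [completeBipartiteGraph_adj] <;> omega

open SimpleGraph in
theorem albertson_le_of_isTree_iff_star
    {V : Type*} [Fintype V] [DecidableEq V] (T : SimpleGraph V) [DecidableRel T.Adj]
    (hT : T.IsTree) (n : ℕ) (hn : Fintype.card V = n) (h2 : 2 ≤ n) :
    albertson T ≤ ((n : ℤ) - 1) * ((n : ℤ) - 2) ∧
    (albertson T = ((n : ℤ) - 1) * ((n : ℤ) - 2) ↔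
      Nonempty (T ≃g completeBipartiteGraph (Fin 1) (Fin (n - 1)))) := by
  have hcard : T.edgeFinset.card = n - 1 := by have := hT.card_edgeFinset; omega
  have : Nontrivial V := Fintype.one_lt_card_iff_nontrivial.1 (by omega)
  have hpos (v : V) : 1 ≤ T.degree v := hT.1.preconnected.degree_pos_of_nontrivial v
  have hlt (v : V) : T.degree v ≤ n - 1 := by have := T.degree_lt_card_verts v; omega
  have hsum : ((n : ℤ) - 1) * ((n : ℤ) - 2) = ∑ e ∈ T.edgeFinset, ((n : ℤ) - 2) := by
    rw [Finset.sum_const, hcard, nsmul_eq_mul, Nat.cast_sub (by omega)]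
    simp
  have hle : ∀ e ∈ T.edgeFinset, Sym2.lift ⟨fun u v => |(T.degree u : ℤ) - (T.degree v : ℤ)|,
      fun _ _ => abs_sub_comm _ _⟩ e ≤ (n : ℤ) - 2 := by
    intro e _
    induction e with | _ u v
    have := hpos u; have := hpos v; have := hlt u; have := hlt v
    simp only [Sym2.lift_mk, abs_le]
    omega
  rw [T.nonempty_iso_star_iff n hn h2, hsum, albertson]
  refine ⟨Finset.sum_le_sum hle, ?_⟩
  rw [Finset.sum_eq_sum_iff_of_le hle]
  constructor
  · intro h
    obtain ⟨e, he⟩ : T.edgeFinset.Nonempty := Finset.card_pos.1 (by omega)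
    have hd := h e he
    induction e with | _ u v
    -- Degrees lie in `[1, n - 1]`, so a difference of `n - 2` makes the larger one `n - 1`.
    obtain ⟨r, hr⟩ : ∃ r, T.degree r = n - 1 := by
      have := hpos u; have := hpos v; have := hlt u; have := hlt v
      simp only [Sym2.lift_mk] at hd
      rcases abs_choice ((T.degree u : ℤ) - T.degree v) with h' | h' <;> rw [h'] at hd
      · exact ⟨u, by omega⟩
      · exact ⟨v, by omega⟩
    exact ⟨r, hT.eq_starGraph ((T.degree_eq_card_sub_one r).1 (by rw [hr, hn]))⟩
  · rintro ⟨r, hr⟩ e he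
    subst hr
    have hc : (starGraph r).degree r = n - 1 := by
      rw [← hn, degree_eq_card_sub_one]
      exact isUniversal_starGraph_self
    have hl (v : V) (hv : v ≠ r) : (starGraph r).degree v = 1 := by
      convert degree_starGraph_of_ne_center hv
    induction e with | _ u v
    have huv : (starGraph r).Adj u v := by simpa only [mem_edgeFinset, mem_edgeSet] using he
    rw [starGraph_adj] at huv
    simp only [Sym2.lift_mk]
    obtain ⟨hne, rfl | rfl⟩ := huv
    · rw [hc, hl v hne.symm, abs_of_nonneg] <;> omega
    · rw [hc, hl u hne, abs_of_nonpos] <;> omega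
end
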